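/- arXiv:1505.02003 — 2 statements merged into one kernel-verified Lean document; each statement's English description precedes it below -/
import Mathlib

section
/- Let b ≥ 2 be an integer, s ∈ ℕ, let a = (a_j)_{j=1}^s ∈ ℝ^s be nondecreasing, and set a'_j = max(a_j, 0). Then for all n ∈ ℕ one has e(n, s, W_{s,a}) ≥ b^{ −(log n)²/(2 s (log b)²) − (3s/2 + ∑_{j=1}^s a'_j)·(log n)/(s·log b) − ( s + ∑_{j=1}^s a'_j ) }. -/
open MeasureTheory Matrix Filter
open scoped ENNReal BigOperators Topology

noncomputable section

/-- The `b`-adic digit of `k : ℕ` at place `b^i` (i.e. the `(i+1)`-st digit). -/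
def natDigit (b k i : ℕ) : ℕ := k / b ^ i % b

/-- The `(i+1)`-st `b`-adic digit of a real number `x ∈ [0,1)`
(using the expansion in which infinitely many digits differ from `b-1`). -/
def realDigit (b : ℕ) (x : ℝ) (i : ℕ) : ℕ := (⌊x * (b : ℝ) ^ (i + 1)⌋ % (b : ℤ)).toNat

/-- The `k`-th one-dimensional `b`-adic Walsh function. -/
def wal1 (b k : ℕ) (x : ℝ) : ℂ :=
  Complex.exp (2 * Real.pi * Complex.I / (b : ℂ) *
    ((∑ i ∈ Finset.range k, natDigit b k i * realDigit b x i : ℕ) : ℂ))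

/-- The `k`-th `s`-dimensional `b`-adic Walsh function. -/
def wal (b : ℕ) {s : ℕ} (k : Fin s → ℕ) (x : Fin s → ℝ) : ℂ :=
  ∏ j, wal1 b (k j) (x j)

/-- The unit cube `[0,1)^s`. -/
def unitCube (s : ℕ) : Set (Fin s → ℝ) := Set.univ.pi fun _ => Set.Ico (0 : ℝ) 1

/-- The `k`-th Walsh coefficient of `f`. -/
def walshCoeff (b : ℕ) {s : ℕ} (f : (Fin s → ℝ) → ℝ) (k : Fin s → ℕ) : ℂ :=
  ∫ x in unitCube s, (f x : ℂ) * (starRingEnd ℂ) (wal b k x)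

/-- The generalized Dick weight `μ_a(k)`, one-dimensional case. -/
def dickWt (b : ℕ) (a : ℝ) (k : ℕ) : ℝ :=
  ∑ i ∈ Finset.range k, if natDigit b k i ≠ 0 then ((i : ℝ) + 1 + a) else 0

/-- The generalized Dick weight `μ_a(k)` for vectors. -/
def dickWtV (b : ℕ) {s : ℕ} (a : Fin s → ℝ) (k : Fin s → ℕ) : ℝ :=
  ∑ j, dickWt b (a j) (k j)

/-- The modified Dick weight `μ'_a(k)`, one-dimensional case. -/
def mdickWt (b : ℕ) (a : ℝ) (k : ℕ) : ℝ :=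
  ∑ i ∈ Finset.range k, if natDigit b k i ≠ 0 then max ((i : ℝ) + 1 + a) 1 else 0

/-- The modified Dick weight `μ'_a(k)` for vectors. -/
def mdickWtV (b : ℕ) {s : ℕ} (a : Fin s → ℝ) (k : Fin s → ℕ) : ℝ :=
  ∑ j, mdickWt b (a j) (k j)

/-- Digitwise subtraction modulo `b` of natural numbers. -/
def dsub (b k k' : ℕ) : ℕ :=
  ∑ i ∈ Finset.range (k + k' + 1), ((natDigit b k i + (b - natDigit b k' i)) % b) * b ^ i

/-- The integral of `f` over the unit cube. -/
def intBox (s : ℕ) (f : (Fin s → ℝ) → ℝ) : ℝ := ∫ x in unitCube s, f x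

/-- Membership in the Walsh space `W_{s,a}`: `f` equals its (convergent) Walsh series
and has finite norm. -/
def MemW (b : ℕ) {s : ℕ} (a : Fin s → ℝ) (f : (Fin s → ℝ) → ℝ) : Prop :=
  (∀ x ∈ unitCube s, HasSum (fun k : Fin s → ℕ => walshCoeff b f k * wal b k x) ((f x : ℂ))) ∧
  BddAbove (Set.range fun k : Fin s → ℕ => ‖walshCoeff b f k‖ * (b : ℝ) ^ dickWtV b a k)

/-- The norm of the Walsh space `W_{s,a}`. -/
def normW (b : ℕ) {s : ℕ} (a : Fin s → ℝ) (f : (Fin s → ℝ) → ℝ) : ℝ :=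
  ⨆ k : Fin s → ℕ, ‖walshCoeff b f k‖ * (b : ℝ) ^ dickWtV b a k

/-- Membership in the modified Walsh space `W'_{s,a}`. -/
def MemW' (b : ℕ) {s : ℕ} (a : Fin s → ℝ) (f : (Fin s → ℝ) → ℝ) : Prop :=
  (∀ x ∈ unitCube s, HasSum (fun k : Fin s → ℕ => walshCoeff b f k * wal b k x) ((f x : ℂ))) ∧
  BddAbove (Set.range fun k : Fin s → ℕ => ‖walshCoeff b f k‖ * (b : ℝ) ^ mdickWtV b a k)

/-- The norm of the modified Walsh space `W'_{s,a}`. -/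
def normW' (b : ℕ) {s : ℕ} (a : Fin s → ℝ) (f : (Fin s → ℝ) → ℝ) : ℝ :=
  ⨆ k : Fin s → ℕ, ‖walshCoeff b f k‖ * (b : ℝ) ^ mdickWtV b a k

/-- The worst-case error of the algorithm `A` over the unit ball of `(H, N)`. -/
def worstErr (s : ℕ) (H : Set ((Fin s → ℝ) → ℝ)) (N : ((Fin s → ℝ) → ℝ) → ℝ)
    (A : ((Fin s → ℝ) → ℝ) → ℝ) : ℝ≥0∞ :=
  ⨆ (f : (Fin s → ℝ) → ℝ) (_ : f ∈ H) (_ : N f ≤ 1), ENNReal.ofReal |intBox s f - A f|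

/-- The `n`-th minimal worst-case error over all algorithms using `n` function values
at points of the unit cube. -/
def minErr (n s : ℕ) (H : Set ((Fin s → ℝ) → ℝ)) (N : ((Fin s → ℝ) → ℝ) → ℝ) : ℝ≥0∞ :=
  ⨅ (t : Fin n → Fin s → ℝ) (_ : ∀ i, t i ∈ unitCube s) (φ : (Fin n → ℝ) → ℝ),
    worstErr s H N fun f => φ fun i => f (t i)

/-- Partial derivative in the `j`-th coordinate. -/
def pd {s : ℕ} (j : Fin s) (f : (Fin s → ℝ) → ℝ) : (Fin s → ℝ) → ℝ :=
  fun x => deriv (fun t => f (Function.update x j t)) (x j)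

/-- The mixed partial derivative `f^{(α)}`. -/
def mpd {s : ℕ} (α : Fin s → ℕ) (f : (Fin s → ℝ) → ℝ) : (Fin s → ℝ) → ℝ :=
  (List.finRange s).foldr (fun j g => (pd j)^[α j] g) f

/-- Membership in the space `S_{s,u}` of smooth functions. -/
def MemS {s : ℕ} (u : Fin s → ℝ) (f : (Fin s → ℝ) → ℝ) : Prop :=
  ContDiff ℝ (⊤ : ℕ∞) f ∧
  BddAbove (Set.range fun α : Fin s → ℕ =>
    (∫ x in unitCube s, |mpd α f x|) / ∏ j, u j ^ α j)

/-- The norm of the space `S_{s,u}`. -/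
def normS {s : ℕ} (u : Fin s → ℝ) (f : (Fin s → ℝ) → ℝ) : ℝ :=
  ⨆ α : Fin s → ℕ, (∫ x in unitCube s, |mpd α f x|) / ∏ j, u j ^ α j

/-- The column vector of the first `m` `b`-adic digits of `k`. -/
def trunc (b m k : ℕ) : Fin m → ZMod b := fun i => (natDigit b k (i : ℕ) : ZMod b)

/-- The `m`-th point of the digital net determined by generating matrices `G`. -/
def netPoint (b : ℕ) {s l d : ℕ} (G : Fin s → Matrix (Fin l) (Fin d) (ZMod b)) (m : ℕ) :
    Fin s → ℝ :=
  fun j => ∑ i : Fin l, (((G j).mulVec (trunc b d m)) i).val / (b : ℝ) ^ ((i : ℕ) + 1)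

/-- The dual net of the digital net determined by `G`. -/
def dualNet (b : ℕ) {s l d : ℕ} (G : Fin s → Matrix (Fin l) (Fin d) (ZMod b)) :
    Set (Fin s → ℕ) :=
  {k | ∑ j, (G j)ᵀ.mulVec (trunc b l (k j)) = 0}

/-- The QMC algorithm given by the digital net with generating matrices `G`. -/
def qmcNet (b : ℕ) {s l d : ℕ} (G : Fin s → Matrix (Fin l) (Fin d) (ZMod b))
    (f : (Fin s → ℝ) → ℝ) : ℝ :=
  ((b : ℝ) ^ d)⁻¹ * ∑ m ∈ Finset.range (b ^ d), f (netPoint b G m)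

/-- `n_j = #{i ∈ ℕ : i + a ≤ 1}` (with `i` ranging over positive integers). -/
def negCount (a : ℝ) : ℕ := Set.ncard {i : ℕ | 0 < i ∧ (i : ℝ) + a ≤ 1}


lemma sumrange_eq {M : Type*} [AddCommMonoid M] (F : ℕ → M) (k m : ℕ) (h1 : ∀ i, k ≤ i → F i = 0)
    (h2 : ∀ i, m ≤ i → F i = 0) : ∑ i ∈ Finset.range k, F i = ∑ i ∈ Finset.range m, F i := by
  rcases le_total k m with h | h
  · apply Finset.sum_subset (Finset.range_mono h)
    intro i _ hi
    exact h1 i (by simpa using hi)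
  · symm
    apply Finset.sum_subset (Finset.range_mono h)
    intro i _ hi
    exact h2 i (by simpa using hi)

lemma natDigit_zero_of_lt {b k m i : ℕ} (hb : 2 ≤ b) (hk : k < b ^ m) (hi : m ≤ i) :
    natDigit b k i = 0 := by
  unfold natDigit
  rw [Nat.div_eq_of_lt (lt_of_lt_of_le hk (Nat.pow_le_pow_right (by omega) hi))]
  simp

lemma natDigit_lt {b : ℕ} (hb : 2 ≤ b) (k i : ℕ) : natDigit b k i < b :=
  Nat.mod_lt _ (by omega)

lemma exists_digit {b k m : ℕ} (hb : 2 ≤ b) (hk : b ^ m ≤ k) :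
    ∃ i, m ≤ i ∧ i < k ∧ natDigit b k i ≠ 0 := by
  have hk0 : k ≠ 0 := by
    have : 0 < b ^ m := by positivity
    omega
  refine ⟨Nat.log b k, ?_, Nat.log_lt_self b hk0, ?_⟩
  · exact (Nat.le_log_iff_pow_le (by omega) hk0).2 hk
  · unfold natDigit
    have h1 := Nat.pow_log_le_self b hk0
    have h2 := Nat.lt_pow_succ_log_self (b := b) (by omega) k
    have h3 : k / b ^ Nat.log b k < b := by
      apply Nat.div_lt_of_lt_mul
      rwa [pow_succ] at h2
    rw [Nat.mod_eq_of_lt h3]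
    have : 0 < k / b ^ Nat.log b k := Nat.div_pos h1 (by positivity)
    omega

lemma realDigit_lt {b : ℕ} (hb : 2 ≤ b) (x : ℝ) (i : ℕ) : realDigit b x i < b := by
  unfold realDigit
  have h1 := Int.emod_lt_of_pos ⌊x * (b : ℝ) ^ (i + 1)⌋ (show (0:ℤ) < b by omega)
  have h2 := Int.emod_nonneg ⌊x * (b : ℝ) ^ (i + 1)⌋ (show (b:ℤ) ≠ 0 by omega)
  omega

lemma realDigit_add (b : ℕ) (x : ℝ) (q i : ℕ) : realDigit b (x + q) i = realDigit b x i := by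
  unfold realDigit
  have : (x + q) * (b : ℝ) ^ (i + 1) = x * (b : ℝ) ^ (i + 1) + ((b * (q * b ^ i) : ℤ) : ℝ) := by
    push_cast; ring
  rw [this, Int.floor_add_intCast, Int.add_mul_emod_self_left]

lemma realDigit_succ (b : ℕ) (x : ℝ) (i : ℕ) :
    realDigit b x (i + 1) = realDigit b (b * x) i := by
  unfold realDigit
  congr 3
  ring

lemma measurable_realDigit (b i : ℕ) : Measurable (fun x => realDigit b x i) := by
  unfold realDigit
  have h : Measurable (fun n : ℤ => (n % (b:ℤ)).toNat) := measurable_from_top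
  exact h.comp (Int.measurable_floor.comp (measurable_id.mul_const _))

def zt (b : ℕ) : ℂ := Complex.exp (2 * Real.pi * Complex.I / (b : ℂ))

lemma wal1_eq {b k N : ℕ} (hb : 2 ≤ b) (hk : k < b ^ N) (x : ℝ) :
    wal1 b k x = ∏ i ∈ Finset.range N, zt b ^ (natDigit b k i * realDigit b x i) := by
  unfold wal1
  rw [sumrange_eq _ k N, mul_comm, Complex.exp_nat_mul, Finset.prod_pow_eq_pow_sum]
  · rfl
  · intro i hi
    rw [natDigit_zero_of_lt hb (Nat.lt_pow_self (by omega) : k < b ^ k) hi, zero_mul]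
  · intro i hi
    rw [natDigit_zero_of_lt hb hk hi, zero_mul]

lemma zt_norm {b : ℕ} : ‖zt b‖ = 1 := by
  unfold zt
  rw [show (2 * Real.pi * Complex.I / (b : ℂ)) = ((2 * Real.pi / b : ℝ) : ℂ) * Complex.I by
    push_cast; ring]
  exact Complex.norm_exp_ofReal_mul_I _

lemma zt_conj {b : ℕ} : (starRingEnd ℂ) (zt b) = (zt b)⁻¹ :=
  (Complex.inv_eq_conj zt_norm).symm

lemma char_sum {b : ℕ} (hb : 2 ≤ b) {x y : ℕ} (hx : x < b) (hy : y < b) :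
    ∑ q ∈ Finset.range b, zt b ^ (q * x) * (starRingEnd ℂ) (zt b ^ (q * y))
      = if x = y then (b : ℂ) else 0 := by
  have hp : IsPrimitiveRoot (zt b) b := Complex.isPrimitiveRoot_exp b (by omega)
  have h0 : zt b ≠ 0 := Complex.exp_ne_zero _
  have key : ∀ q, zt b ^ (q * x) * (starRingEnd ℂ) (zt b ^ (q * y))
      = (zt b ^ x * (zt b ^ y)⁻¹) ^ q := by
    intro q
    rw [map_pow, zt_conj, mul_pow, ← pow_mul, inv_pow, inv_pow, ← pow_mul, mul_comm q x,
      mul_comm q y]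
  simp_rw [key]
  split_ifs with h
  · subst h
    rw [mul_inv_cancel₀ (pow_ne_zero _ h0)]
    simp
  · have hr : zt b ^ x * (zt b ^ y)⁻¹ ≠ 1 := by
      intro hc
      apply h
      apply hp.pow_inj hx hy
      field_simp at hc
      exact hc
    have hrb : (zt b ^ x * (zt b ^ y)⁻¹) ^ b = 1 := by
      rw [mul_pow, inv_pow, ← pow_mul, ← pow_mul, mul_comm x, mul_comm y, pow_mul, pow_mul,
        hp.pow_eq_one]
      simp
    rw [geom_sum_eq hr, hrb]
    simp

lemma intble {b : ℕ} (hb : 2 ≤ b) (N : ℕ) (h : ℕ → ℕ → ℂ) (u v : ℝ) :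
    IntervalIntegrable (fun x => ∏ i ∈ Finset.range N, h i (realDigit b x i)) volume u v := by
  have hm : Measurable (fun x => ∏ i ∈ Finset.range N, h i (realDigit b x i)) := by
    apply Finset.measurable_fun_prod
    intro i _
    have : Measurable (h i) := measurable_from_top
    exact this.comp (measurable_realDigit b i)
  have hbd : ∀ x, ‖∏ i ∈ Finset.range N, h i (realDigit b x i)‖
      ≤ ∏ i ∈ Finset.range N, ∑ q ∈ Finset.range b, ‖h i q‖ := by
    intro x
    rw [norm_prod]
    apply Finset.prod_le_prod
    · intros; positivity
    · intro i _
      exact Finset.single_le_sum (f := fun q => ‖h i q‖) (fun _ _ => norm_nonneg _)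
        (Finset.mem_range.2 (realDigit_lt hb x i))
  rw [intervalIntegrable_iff]
  have : IsFiniteMeasure (volume.restrict (Set.uIoc u v)) := ⟨by simp [Set.uIoc]⟩
  exact Integrable.of_bound hm.aestronglyMeasurable _ (Filter.Eventually.of_forall hbd)

lemma indep {b : ℕ} (hb : 2 ≤ b) (N : ℕ) : ∀ (h : ℕ → ℕ → ℂ),
    ∫ x in (0:ℝ)..1, ∏ i ∈ Finset.range N, h i (realDigit b x i)
      = ∏ i ∈ Finset.range N, ((b : ℂ)⁻¹ * ∑ q ∈ Finset.range b, h i q) := by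
  induction N with
  | zero => intro h; simp
  | succ N ih =>
    intro h
    have hb0 : (b : ℝ) ≠ 0 := by positivity
    set G : ℝ → ℂ := fun y => ∏ i ∈ Finset.range N, h (i + 1) (realDigit b y i) with hG
    set H : ℝ → ℂ := fun y => h 0 (realDigit b (y / b) 0) with hH
    have hGH : ∀ x, ∏ i ∈ Finset.range (N + 1), h i (realDigit b x i)
        = (fun y => G y * H y) ((b : ℝ) * x) := by
      intro x
      rw [Finset.prod_range_succ']
      simp only [hG, hH, realDigit_succ]
      congr 3
      field_simp
    have hGHint : ∀ u v, IntervalIntegrable (fun y => G y * H y) volume u v := by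
      intro u v
      have := (intble hb (N + 1) h (u / b) (v / b)).comp_mul_left (c := (b:ℝ)⁻¹)
      have h3 : (fun y => G y * H y)
          = fun y => ∏ i ∈ Finset.range (N + 1), h i (realDigit b ((b:ℝ)⁻¹ * y) i) := by
        funext y
        rw [hGH, mul_inv_cancel_left₀ hb0]
      rw [h3]
      convert this using 1 <;> field_simp
    rw [Finset.prod_range_succ', ← ih (fun i => h (i + 1))]
    simp_rw [hGH]
    rw [intervalIntegral.integral_comp_mul_left (fun y => G y * H y) hb0]
    have hsum := intervalIntegral.sum_integral_adjacent_intervals (μ := volume)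
      (f := fun y => G y * H y) (a := fun q : ℕ => (q : ℝ)) (n := b)
      (fun k _ => hGHint _ _)
    simp only [Nat.cast_zero] at hsum
    rw [mul_zero, mul_one, ← hsum]
    have hq : ∀ q ∈ Finset.range b, ∫ y in (q:ℝ)..((q + 1 : ℕ) : ℝ), G y * H y
        = h 0 q * ∫ y in (0:ℝ)..1, G y := by
      intro q hq
      have hqb := Finset.mem_range.1 hq
      rw [← intervalIntegral.integral_const_mul]
      have e1 : ∫ y in (0:ℝ)..1, h 0 q * G y = ∫ y in (0:ℝ)..1, (fun y => h 0 q * G y) (y + q) := by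
        congr 1
        funext y
        simp only [hG, realDigit_add]
      rw [e1, intervalIntegral.integral_comp_add_right (fun y => h 0 q * G y)]
      rw [intervalIntegral.integral_of_le (by push_cast; linarith),
        intervalIntegral.integral_of_le (by linarith), integral_Ioc_eq_integral_Ioo,
        integral_Ioc_eq_integral_Ioo, zero_add, add_comm 1 (q:ℝ)]
      push_cast
      apply setIntegral_congr_fun measurableSet_Ioo
      intro y hy
      have hfl : ⌊y⌋ = (q:ℤ) := Int.floor_eq_iff.2 ⟨by simpa using hy.1.le, by simpa using hy.2⟩
      have : realDigit b (y / b) 0 = q := by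
        unfold realDigit
        rw [zero_add, pow_one, div_mul_cancel₀ _ hb0, hfl]
        norm_cast
        rw [Nat.mod_eq_of_lt hqb]
      simp only [hH, this]
      ring
    rw [Finset.sum_congr rfl hq, ← Finset.sum_mul]
    simp only [Complex.real_smul]
    push_cast
    ring

lemma digit_sum {b : ℕ} (hb : 2 ≤ b) (m : ℕ) : ∀ (u : ℕ → ℕ → ℂ),
    ∑ k ∈ Finset.range (b ^ m), ∏ i ∈ Finset.range m, u i (natDigit b k i)
      = ∏ i ∈ Finset.range m, ∑ q ∈ Finset.range b, u i q := by
  induction m with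
  | zero => intro u; simp
  | succ m ih =>
    intro u
    have hb0 : 0 < b := by omega
    rw [Finset.prod_range_succ', ← ih (fun i => u (i + 1)), Finset.sum_mul_sum,
      ← Finset.sum_product']
    apply Finset.sum_nbij' (fun k => (k / b, k % b)) (fun p => p.1 * b + p.2)
    · intro k hk
      simp only [Finset.mem_product, Finset.mem_range] at hk ⊢
      refine ⟨Nat.div_lt_of_lt_mul ?_, Nat.mod_lt _ hb0⟩
      rwa [pow_succ, mul_comm] at hk
    · intro p hp
      simp only [Finset.mem_product, Finset.mem_range] at hp ⊢
      rw [pow_succ]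
      calc p.1 * b + p.2 < p.1 * b + b := by omega
        _ = (p.1 + 1) * b := by ring
        _ ≤ b ^ m * b := Nat.mul_le_mul_right _ hp.1
    · intro k _
      exact Nat.div_add_mod' k b
    · intro p hp
      simp only [Finset.mem_product, Finset.mem_range] at hp
      ext
      · simp only
        rw [mul_comm, Nat.mul_add_div hb0, Nat.div_eq_of_lt hp.2, add_zero]
      · simp only
        rw [mul_comm, Nat.mul_add_mod, Nat.mod_eq_of_lt hp.2]
    · intro k _
      rw [Finset.prod_range_succ']
      congr 1
      · apply Finset.prod_congr rfl
        intro i _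
        congr 1
        unfold natDigit
        rw [Nat.div_div_eq_div_mul, pow_succ']
      · simp [natDigit]

def gf (b m : ℕ) (η : ℕ → ℕ) (x : ℝ) : ℝ :=
  ∏ i ∈ Finset.range m, if realDigit b x i = η i then (b : ℝ) else 0

def cf (b m : ℕ) (η : ℕ → ℕ) (k : ℕ) : ℂ :=
  if k < b ^ m then ∏ i ∈ Finset.range m, (starRingEnd ℂ) (zt b ^ (natDigit b k i * η i)) else 0

lemma kernel1 {b : ℕ} (hb : 2 ≤ b) (m : ℕ) (η : ℕ → ℕ) (hη : ∀ i, η i < b) (x : ℝ) :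
    ∑ k ∈ Finset.range (b ^ m), cf b m η k * wal1 b k x = (gf b m η x : ℂ) := by
  have h1 : ∀ k ∈ Finset.range (b ^ m), cf b m η k * wal1 b k x
      = ∏ i ∈ Finset.range m, (fun i q => zt b ^ (q * realDigit b x i) *
        (starRingEnd ℂ) (zt b ^ (q * η i))) i (natDigit b k i) := by
    intro k hk
    have hk' := Finset.mem_range.1 hk
    rw [wal1_eq hb hk', cf, if_pos hk', ← Finset.prod_mul_distrib]
    exact Finset.prod_congr rfl fun i _ => mul_comm _ _
  rw [Finset.sum_congr rfl h1]
  refine (digit_sum hb m (fun i q => zt b ^ (q * realDigit b x i) *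
        (starRingEnd ℂ) (zt b ^ (q * η i)))).trans ?_
  unfold gf
  push_cast
  apply Finset.prod_congr rfl
  intro i _
  rw [char_sum hb (realDigit_lt hb x i) (hη i)]
  split_ifs <;> simp

lemma coef1 {b : ℕ} (hb : 2 ≤ b) (m : ℕ) (η : ℕ → ℕ) (hη : ∀ i, η i < b) (k : ℕ) :
    ∫ x in Set.Ico (0:ℝ) 1, (gf b m η x : ℂ) * (starRingEnd ℂ) (wal1 b k x) = cf b m η k := by
  have hb0 : (b : ℂ) ≠ 0 := by
    have : b ≠ 0 := by omega
    exact_mod_cast this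
  rw [integral_Ico_eq_integral_Ioo, ← integral_Ioc_eq_integral_Ioo,
    ← intervalIntegral.integral_of_le zero_le_one]
  set N := max m k with hN
  have hkN : k < b ^ N :=
    lt_of_lt_of_le (Nat.lt_pow_self (by omega)) (Nat.pow_le_pow_right (by omega) (le_max_right _ _))
  set h : ℕ → ℕ → ℂ := fun i q => (if i < m then (if q = η i then (b : ℂ) else 0) else 1) *
    (starRingEnd ℂ) (zt b ^ (natDigit b k i * q)) with hh
  have e1 : ∀ x, (gf b m η x : ℂ) * (starRingEnd ℂ) (wal1 b k x)
      = ∏ i ∈ Finset.range N, h i (realDigit b x i) := by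
    intro x
    rw [wal1_eq hb hkN, map_prod, hh]
    simp only
    rw [Finset.prod_mul_distrib]
    congr 1
    unfold gf
    push_cast
    rw [← Finset.prod_subset (Finset.range_mono (le_max_left m k : m ≤ N))]
    · apply Finset.prod_congr rfl
      intro i hi
      rw [if_pos (Finset.mem_range.1 hi)]
      split_ifs <;> simp
    · intro i _ hi
      rw [if_neg (by simpa using hi)]
  simp_rw [e1]
  rw [indep hb]
  have hlow : ∀ i, i < m → (b : ℂ)⁻¹ * ∑ q ∈ Finset.range b, h i q
      = (starRingEnd ℂ) (zt b ^ (natDigit b k i * η i)) := by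
    intro i hi
    rw [Finset.sum_eq_single (η i)]
    · simp only [hh, if_pos hi, if_true]
      rw [inv_mul_cancel_left₀ hb0]
    · intro q _ hq
      simp [hh, hi, hq]
    · intro hc
      exact absurd (Finset.mem_range.2 (hη i)) hc
  have hhigh : ∀ i, m ≤ i → (b : ℂ)⁻¹ * ∑ q ∈ Finset.range b, h i q
      = if natDigit b k i = 0 then 1 else 0 := by
    intro i hi
    have e2 := char_sum hb (show 0 < b by omega) (natDigit_lt hb k i)
    have e3 : ∀ q, h i q = zt b ^ (q * 0) * (starRingEnd ℂ) (zt b ^ (q * natDigit b k i)) := by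
      intro q
      simp only [hh, if_neg (not_lt.2 hi), mul_comm q, zero_mul, pow_zero]
    simp_rw [e3]
    rw [e2]
    by_cases hd : natDigit b k i = 0
    · simp [hd, hb0]
    · simp [hd, Ne.symm hd]
  unfold cf
  split_ifs with hk
  · rw [← Finset.prod_subset (Finset.range_mono (le_max_left m k : m ≤ N))]
    · exact Finset.prod_congr rfl fun i hi => hlow i (Finset.mem_range.1 hi)
    · intro i _ hi
      have hi' : m ≤ i := by simpa using hi
      rw [hhigh i hi', if_pos (natDigit_zero_of_lt hb hk hi')]
  · obtain ⟨i, h1, h2, h3⟩ := exists_digit hb (not_lt.1 hk)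
    apply Finset.prod_eq_zero (Finset.mem_range.2 (lt_of_lt_of_le h2 (le_max_right m k)))
    rw [hhigh i h1, if_neg h3]

lemma cf_norm_le (b m : ℕ) (η : ℕ → ℕ) (k : ℕ) : ‖cf b m η k‖ ≤ 1 := by
  unfold cf
  split_ifs
  · rw [norm_prod]
    simp [zt_norm]
  · simp

lemma dickWt_le {b : ℕ} (hb : 2 ≤ b) {m k : ℕ} (a : ℝ) (hk : k < b ^ m) :
    dickWt b a k ≤ m * (m + 1) / 2 + m * max a 0 := by
  unfold dickWt
  rw [sumrange_eq _ k m]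
  · calc _ ≤ ∑ i ∈ Finset.range m, ((i : ℝ) + 1 + max a 0) := by
          apply Finset.sum_le_sum
          intro i _
          have h1 := le_max_left a 0
          have h2 := le_max_right a 0
          split_ifs
          · linarith
          · positivity
      _ = _ := by
          clear hk
          induction m with
          | zero => simp
          | succ m ih => rw [Finset.sum_range_succ, ih]; push_cast; ring
  · intro i hi
    rw [natDigit_zero_of_lt hb (Nat.lt_pow_self (by omega) : k < b ^ k) hi]; simp
  · intro i hi
    rw [natDigit_zero_of_lt hb hk hi]; simp

def Ff (b m : ℕ) {s : ℕ} (η : Fin s → ℕ → ℕ) (θ : ℝ) (x : Fin s → ℝ) : ℝ :=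
  θ * ∏ j, gf b m (η j) (x j)

lemma coefF {b : ℕ} (hb : 2 ≤ b) (m : ℕ) {s : ℕ} (η : Fin s → ℕ → ℕ) (hη : ∀ j i, η j i < b)
    (θ : ℝ) (k : Fin s → ℕ) :
    walshCoeff b (Ff b m η θ) k = θ * ∏ j, cf b m (η j) (k j) := by
  unfold walshCoeff unitCube Ff wal
  have e : ∀ x : Fin s → ℝ, ((θ * ∏ j, gf b m (η j) (x j) : ℝ) : ℂ) *
      (starRingEnd ℂ) (∏ j, wal1 b (k j) (x j))
      = θ * ∏ j, (fun j y => (gf b m (η j) y : ℂ) * (starRingEnd ℂ) (wal1 b (k j) y)) j (x j) := by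
    intro x
    simp only
    rw [Finset.prod_mul_distrib, map_prod]
    push_cast
    ring
  rw [integral_congr_ae (Filter.Eventually.of_forall e)]
  rw [integral_const_mul, volume_pi, Measure.restrict_pi_pi,
    integral_fintype_prod_eq_prod
      (fun j y => (gf b m (η j) y : ℂ) * (starRingEnd ℂ) (wal1 b (k j) y))]
  congr 1
  exact Finset.prod_congr rfl fun j _ => coef1 hb m (η j) (hη j) (k j)

lemma intF {b : ℕ} (hb : 2 ≤ b) (m : ℕ) {s : ℕ} (η : Fin s → ℕ → ℕ) (hη : ∀ j i, η j i < b)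
    (θ : ℝ) : intBox s (Ff b m η θ) = θ := by
  have h := coefF hb m η hη θ 0
  have hc : ∀ j, cf b m (η j) ((0 : Fin s → ℕ) j) = 1 := by
    intro j
    have : 0 < b ^ m := by positivity
    simp [cf, natDigit, this]
  simp only [hc, Finset.prod_const_one, mul_one] at h
  have hw : ∀ x, wal b (0 : Fin s → ℕ) x = 1 := by intro x; simp [wal, wal1]
  unfold walshCoeff at h
  simp only [hw, map_one, mul_one] at h
  rw [integral_complex_ofReal] at h
  exact_mod_cast h

lemma coefBound {b : ℕ} (hb : 2 ≤ b) (m : ℕ) {s : ℕ} (a : Fin s → ℝ) (η : Fin s → ℕ → ℕ)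
    (hη : ∀ j i, η j i < b)
    (θ : ℝ) (hθ : |θ| ≤ (b : ℝ) ^ (-(∑ j, ((m : ℝ) * (m + 1) / 2 + m * max (a j) 0))))
    (k : Fin s → ℕ) :
    ‖walshCoeff b (Ff b m η θ) k‖ * (b : ℝ) ^ dickWtV b a k ≤ 1 := by
  have hb1 : (1 : ℝ) ≤ b := by exact_mod_cast (by omega : 1 ≤ b)
  have hbp : (0 : ℝ) < b := by linarith
  rw [coefF hb m η hη]
  by_cases hk : ∀ j, k j < b ^ m
  · have hn : ‖(θ : ℂ) * ∏ j, cf b m (η j) (k j)‖ ≤ |θ| := by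
      rw [norm_mul, norm_prod, Complex.norm_real, Real.norm_eq_abs]
      apply mul_le_of_le_one_right (abs_nonneg _)
      exact Finset.prod_le_one (fun _ _ => norm_nonneg _) fun j _ => cf_norm_le _ _ _ _
    have hd : dickWtV b a k ≤ ∑ j, ((m : ℝ) * (m + 1) / 2 + m * max (a j) 0) :=
      Finset.sum_le_sum fun j _ => dickWt_le hb (a j) (hk j)
    calc _ ≤ (b : ℝ) ^ (-(∑ j, ((m : ℝ) * (m + 1) / 2 + m * max (a j) 0))) *
          (b : ℝ) ^ (∑ j, ((m : ℝ) * (m + 1) / 2 + m * max (a j) 0)) := by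
          apply mul_le_mul (hn.trans hθ) (Real.rpow_le_rpow_of_exponent_le hb1 hd)
          · positivity
          · positivity
      _ = 1 := by rw [← Real.rpow_add hbp]; simp
  · push Not at hk
    obtain ⟨j, hj⟩ := hk
    have : ∏ j, cf b m (η j) (k j) = 0 :=
      Finset.prod_eq_zero (Finset.mem_univ j) (by simp [cf, not_lt.2 hj])
    rw [this]
    simp

lemma sumF {b : ℕ} (hb : 2 ≤ b) (m : ℕ) {s : ℕ} (η : Fin s → ℕ → ℕ) (hη : ∀ j i, η j i < b)
    (θ : ℝ) (x : Fin s → ℝ) :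
    HasSum (fun k : Fin s → ℕ => walshCoeff b (Ff b m η θ) k * wal b k x)
      ((Ff b m η θ x : ℝ) : ℂ) := by
  have h := hasSum_sum_of_ne_finset_zero (L := SummationFilter.unconditional _)
    (f := fun k : Fin s → ℕ => walshCoeff b (Ff b m η θ) k * wal b k x)
    (s := Fintype.piFinset fun _ : Fin s => Finset.range (b ^ m)) (by
      intro k hk
      simp only [Fintype.mem_piFinset, Finset.mem_range, not_forall, not_lt] at hk
      obtain ⟨j, hj⟩ := hk
      rw [coefF hb m η hη]
      have : ∏ j, cf b m (η j) (k j) = 0 :=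
        Finset.prod_eq_zero (Finset.mem_univ j) (by simp [cf, not_lt.2 hj])
      rw [this]
      simp)
  convert h using 1
  unfold Ff
  push_cast
  simp_rw [← kernel1 hb m _ (hη _)]
  rw [Finset.prod_univ_sum, Finset.mul_sum]
  apply Finset.sum_congr rfl
  intro k _
  change _ = walshCoeff b (Ff b m η θ) k * wal b k x
  rw [coefF hb m η hη, Finset.prod_mul_distrib, wal]
  ring

lemma exists_eta {b : ℕ} (hb : 2 ≤ b) (m s n : ℕ) (hn : n < b ^ (s * m)) (t : Fin n → Fin s → ℝ) :
    ∃ η : Fin s → ℕ → ℕ, (∀ j i, η j i < b) ∧ ∀ l, ∃ j, gf b m (η j) (t l j) = 0 := by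
  let D : Fin n → (Fin s → Fin m → Fin b) :=
    fun l j i => ⟨realDigit b (t l j) i, realDigit_lt hb _ _⟩
  have hD : ¬ Function.Surjective D := by
    intro hs
    have := Fintype.card_le_of_surjective D hs
    simp only [Fintype.card_pi, Fintype.card_fin, Finset.prod_const, Finset.card_univ] at this
    rw [← pow_mul, mul_comm] at this
    omega
  unfold Function.Surjective at hD
  push Not at hD
  obtain ⟨η, hη⟩ := hD
  refine ⟨fun j i => if h : i < m then η j ⟨i, h⟩ else 0, ?_, ?_⟩
  · intro j i
    dsimp only
    split_ifs
    · exact (η j _).2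
    · omega
  · intro l
    by_contra hc
    push Not at hc
    apply hη l
    funext j i
    have h := hc j
    unfold gf at h
    rw [Finset.prod_ne_zero_iff] at h
    have h2 := h i (Finset.mem_range.2 i.2)
    simp only [i.2, dif_pos, ne_eq, ite_eq_right_iff, not_forall] at h2
    obtain ⟨h3, _⟩ := h2
    exact Fin.ext h3

/-- explicit lower bound for `e(n, s, W_{s,a})` with `a'_j = max(a_j, 0)`. -/
theorem statement7 (b : ℕ) (hb : 2 ≤ b) (s : ℕ) (hs : 0 < s)
    (a : ℕ → ℝ) (ha : Monotone a) :
    ∀ n : ℕ, 0 < n →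
      ENNReal.ofReal
          ((b : ℝ) ^
            (-(Real.log n) ^ 2 / (2 * s * (Real.log b) ^ 2) -
              (3 * s / 2 + ∑ j : Fin s, max (a j) 0) * (Real.log n / (s * Real.log b)) -
              ((s : ℝ) + ∑ j : Fin s, max (a j) 0))) ≤
        minErr n s {f | MemW b (fun j : Fin s => a j) f} (normW b (fun j : Fin s => a j)) := by
  intro n hn
  have hb1 : (1 : ℝ) < b := by exact_mod_cast (by omega : 1 < b)
  have hbp : (0 : ℝ) < b := by linarith
  have hlb : 0 < Real.log b := Real.log_pos hb1
  have hsR : (0 : ℝ) < s := by exact_mod_cast hs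
  have hn1 : (1 : ℝ) ≤ n := by exact_mod_cast hn
  have hln : 0 ≤ Real.log n := Real.log_nonneg hn1
  set L := Real.log n / (s * Real.log b) with hL
  have hL0 : 0 ≤ L := by positivity
  set A := ∑ j : Fin s, max (a j) 0 with hA
  have hA0 : 0 ≤ A := Finset.sum_nonneg fun j _ => le_max_right _ _
  set m := ⌊L⌋₊ + 1 with hm
  have hm1 : L < m := by rw [hm]; push_cast; exact Nat.lt_floor_add_one L
  have hm2 : (m : ℝ) ≤ L + 1 := by
    have := Nat.floor_le hL0
    rw [hm]; push_cast; linarith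
  have hnlt : n < b ^ (s * m) := by
    have h1 : Real.log n < Real.log ((b : ℝ) ^ (s * m)) := by
      rw [Real.log_pow]
      rw [hL, div_lt_iff₀ (by positivity)] at hm1
      push_cast
      nlinarith
    have h2 := (Real.log_lt_log_iff (by linarith) (by positivity)).1 h1
    exact_mod_cast h2
  set E := (b : ℝ) ^ (-(∑ j : Fin s, ((m : ℝ) * (m + 1) / 2 + m * max (a j) 0))) with hE
  have hE0 : 0 ≤ E := by positivity
  have hle : (b : ℝ) ^
            (-(Real.log n) ^ 2 / (2 * s * (Real.log b) ^ 2) -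
              (3 * s / 2 + A) * L - ((s : ℝ) + A)) ≤ E := by
    apply Real.rpow_le_rpow_of_exponent_le hb1.le
    rw [Finset.sum_add_distrib, ← Finset.mul_sum, ← hA]
    simp only [Finset.sum_const, Finset.card_univ, Fintype.card_fin, nsmul_eq_mul]
    have e1 : -(Real.log n) ^ 2 / (2 * s * (Real.log b) ^ 2) = - (s * L ^ 2 / 2) := by
      rw [hL]; field_simp
    rw [e1]
    have h1 : (m : ℝ) * (m + 1) ≤ (L + 1) * (L + 2) := by
      have : (0 : ℝ) ≤ m := Nat.cast_nonneg _
      nlinarith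
    have h2 : (m : ℝ) * A ≤ (L + 1) * A := mul_le_mul_of_nonneg_right hm2 hA0
    have h3 : (s : ℝ) * ((m : ℝ) * (m + 1) / 2) ≤ s * ((L + 1) * (L + 2) / 2) :=
      mul_le_mul_of_nonneg_left (by linarith) hsR.le
    nlinarith
  refine (ENNReal.ofReal_le_ofReal hle).trans ?_
  unfold minErr
  refine le_iInf fun t => le_iInf fun _ => le_iInf fun φ => ?_
  obtain ⟨η, hη, hz⟩ := exists_eta hb m s n hnlt t
  have hzero : ∀ θ, (fun i => Ff b m η θ (t i)) = fun _ => 0 := by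
    intro θ
    funext i
    obtain ⟨j, hj⟩ := hz i
    unfold Ff
    rw [Finset.prod_eq_zero (Finset.mem_univ j) hj, mul_zero]
  have key : ∀ θ : ℝ, |θ| ≤ E → ENNReal.ofReal |θ - φ fun _ => 0| ≤
      worstErr s {f | MemW b (fun j : Fin s => a j) f} (normW b (fun j : Fin s => a j))
        fun f => φ fun i => f (t i) := by
    intro θ hθ
    have hbd := coefBound hb m (fun j : Fin s => a j) η hη θ hθ
    unfold worstErr
    refine le_iSup_of_le (Ff b m η θ) (le_iSup_of_le ?_ (le_iSup_of_le ?_ ?_))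
    · refine ⟨fun x _ => sumF hb m η hη θ x, 1, ?_⟩
      rintro _ ⟨k, rfl⟩
      exact hbd k
    · exact ciSup_le hbd
    · dsimp only
      rw [intF hb m η hη, hzero]
  rcases le_total 0 (φ fun _ => 0) with h | h
  · refine le_trans (ENNReal.ofReal_le_ofReal ?_) (key (-E) (by rw [abs_neg, abs_of_nonneg hE0]))
    rw [abs_of_nonpos (by linarith)]
    linarith
  · refine le_trans (ENNReal.ofReal_le_ofReal ?_) (key E (by rw [abs_of_nonneg hE0]))
    rw [abs_of_nonneg (by linarith)]
    linarith

end
end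

section
/- Let b ≥ 2 be an integer, s ∈ ℕ, and let a = (a_j)_{j≥1} be a nondecreasing sequence of real weights. Set n_j = #{i ∈ ℕ : i + a_j ≤ 1} and S = (b−1)·∑_{j=1}^s n_j. Then for all M ≥ 0: V_{s,a}(M) ≤ exp( S + 2·√((b−1)·s·M) ). -/
open MeasureTheory Matrix Filter
open scoped ENNReal BigOperators Topology

noncomputable section

lemma aux_digits (b : ℕ) (N k k' : ℕ) (h : ∀ i < N, natDigit b k i = natDigit b k' i) :
    k % b ^ N = k' % b ^ N := by
  induction N with
  | zero => simp [Nat.mod_one]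
  | succ n ih =>
    rw [Nat.mod_pow_succ, Nat.mod_pow_succ, ih fun i hi => h i (by omega)]
    have := h n (by omega)
    unfold natDigit at this
    rw [this]

lemma aux_mdick (b : ℕ) (hb : 2 ≤ b) (a : ℝ) (k N : ℕ) (h : k ≤ N) :
    mdickWt b a k =
      ∑ i : Fin N, if natDigit b k i ≠ 0 then max (((i : ℕ) : ℝ) + 1 + a) 1 else 0 := by
  rw [Fin.sum_univ_eq_sum_range
    (fun i => if natDigit b k i ≠ 0 then max ((i : ℝ) + 1 + a) 1 else 0) N]
  unfold mdickWt
  apply Finset.sum_subset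
  · intro i hi
    simp at hi ⊢
    omega
  · intro i _ hi
    have hi' : k ≤ i := by simpa using hi
    have : natDigit b k i = 0 := by
      unfold natDigit
      rw [Nat.div_eq_of_lt, Nat.zero_mod]
      exact lt_of_le_of_lt hi' (Nat.lt_pow_self (by omega))
    simp [this]

lemma aux_neg (a : ℝ) : 0 ≤ (negCount a : ℝ) + a := by
  by_contra hc
  push Not at hc
  have hfin : {i : ℕ | 0 < i ∧ (i : ℝ) + a ≤ 1}.Finite := by
    apply (Set.finite_Iic ⌈1 - a⌉₊).subset
    rintro i ⟨_, hi⟩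
    have : (i : ℝ) ≤ ⌈1 - a⌉₊ := le_trans (by linarith) (Nat.le_ceil _)
    exact_mod_cast this
  have hsub : (↑(Finset.Icc 1 (negCount a + 1)) : Set ℕ) ⊆
      {i : ℕ | 0 < i ∧ (i : ℝ) + a ≤ 1} := by
    intro i hi
    simp only [Finset.coe_Icc, Set.mem_Icc] at hi
    refine ⟨by omega, ?_⟩
    have : (i : ℝ) ≤ (negCount a : ℝ) + 1 := by exact_mod_cast hi.2
    linarith
  have := Set.ncard_le_ncard hsub hfin
  rw [Set.ncard_coe_finset] at this
  simp at this
  unfold negCount at this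
  omega

lemma aux_geom (t : ℝ) (ht : 0 < t) (N : ℕ) :
    ∑ r ∈ Finset.range N, (t / (1 + t)) ^ (r + 1) ≤ t := by
  have h : ∑ r ∈ Finset.range N, (t / (1 + t)) ^ (r + 1) = t * (1 - (t / (1 + t)) ^ N) := by
    induction N with
    | zero => simp
    | succ n ih =>
      rw [Finset.sum_range_succ, ih, pow_succ]
      have : (1 + t) ≠ 0 := by positivity
      field_simp
      ring
  rw [h]
  have : 0 ≤ (t / (1 + t)) ^ N := by positivity
  nlinarith

lemma aux_sum (a t l : ℝ) (ht : 0 < t) (hl : Real.exp (-l) = t / (1 + t)) (hl0 : 0 ≤ l) (N : ℕ) :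
    ∑ i : Fin N, Real.exp (-l * max (((i : ℕ) : ℝ) + 1 + a) 1) ≤ negCount a + t := by
  rw [Fin.sum_univ_eq_sum_range (fun i => Real.exp (-l * max ((i : ℝ) + 1 + a) 1)) N]
  have hn := aux_neg a
  generalize negCount a = n at hn
  calc ∑ i ∈ Finset.range N, Real.exp (-l * max ((i : ℝ) + 1 + a) 1)
      ≤ ∑ i ∈ Finset.range (n + N), Real.exp (-l * max ((i : ℝ) + 1 + a) 1) := by
        apply Finset.sum_le_sum_of_subset_of_nonneg
        · intro i hi
          simp at hi ⊢
          omega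
        · intros
          positivity
    _ = ∑ i ∈ Finset.range n, Real.exp (-l * max ((i : ℝ) + 1 + a) 1) +
        ∑ r ∈ Finset.range N, Real.exp (-l * max (((n + r : ℕ) : ℝ) + 1 + a) 1) :=
        Finset.sum_range_add _ _ _
    _ ≤ ∑ i ∈ Finset.range n, (1 : ℝ) + ∑ r ∈ Finset.range N, (t / (1 + t)) ^ (r + 1) := by
        apply add_le_add
        · apply Finset.sum_le_sum
          intro i _
          rw [Real.exp_le_one_iff]
          have : 1 ≤ max ((i : ℝ) + 1 + a) 1 := le_max_right _ _
          nlinarith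
        · apply Finset.sum_le_sum
          intro r _
          rw [← hl, ← Real.exp_nat_mul]
          apply Real.exp_le_exp.mpr
          have : (((n + r : ℕ) : ℝ) + 1 + a) ≤ max (((n + r : ℕ) : ℝ) + 1 + a) 1 := le_max_left _ _
          push_cast at this ⊢
          nlinarith
    _ ≤ n + t := by
        have := aux_geom t ht N
        simpa using this

lemma aux_main (b : ℕ) (hb : 2 ≤ b) (s : ℕ) (a : Fin s → ℝ) (M : ℝ) (hM : 0 ≤ M)
    (t : ℝ) (ht : 0 < t) (T : Finset (Fin s → ℕ)) (hT : ∀ k ∈ T, mdickWtV b a k ≤ M) :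
    (T.card : ℝ) ≤ Real.exp (((b : ℝ) - 1) * ∑ j, (negCount (a j) : ℝ) +
      (((b : ℝ) - 1) * s * t + M / t)) := by
  have hb1 : (0 : ℝ) ≤ (b : ℝ) - 1 := by
    have : (2 : ℝ) ≤ b := by exact_mod_cast hb
    linarith
  haveI : NeZero b := ⟨by omega⟩
  set l : ℝ := Real.log (1 + 1 / t) with hl
  have h1t : 0 < 1 / t := by positivity
  have hl0 : 0 ≤ l := Real.log_nonneg (by linarith)
  have hlt : l ≤ 1 / t := by
    have := Real.log_le_sub_one_of_pos (show 0 < 1 + 1 / t by linarith)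
    linarith
  have hel : Real.exp (-l) = t / (1 + t) := by
    rw [Real.exp_neg, hl, Real.exp_log (by linarith)]
    field_simp
    ring
  obtain ⟨N, hN⟩ : ∃ N : ℕ, ∀ k ∈ T, ∀ j, k j ≤ N := by
    refine ⟨T.sup fun k => Finset.univ.sup k, fun k hk j => ?_⟩
    exact le_trans (Finset.le_sup (f := k) (Finset.mem_univ j))
      (Finset.le_sup (f := fun k : Fin s → ℕ => Finset.univ.sup k) hk)
  let f : Fin s × Fin N → Fin b → ℝ := fun p d =>
    if d ≠ 0 then Real.exp (-l * max (((p.2 : ℕ) : ℝ) + 1 + a p.1) 1) else 1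
  let φ : (Fin s → ℕ) → (Fin s × Fin N → Fin b) := fun k p =>
    ⟨natDigit b (k p.1) p.2, Nat.mod_lt _ (by omega)⟩
  have hinj : Set.InjOn φ T := by
    intro k hk k' hk' h
    funext j
    have h1 := aux_digits b N (k j) (k' j) (fun i hi => by
      have := congrFun h (j, ⟨i, hi⟩)
      exact congrArg Fin.val this)
    have h2 : ∀ m, m ≤ N → m < b ^ N := fun m hm =>
      lt_of_le_of_lt hm (Nat.lt_pow_self (by omega))
    rwa [Nat.mod_eq_of_lt (h2 _ (hN k hk j)), Nat.mod_eq_of_lt (h2 _ (hN k' hk' j))] at h1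
  have hval : ∀ k ∈ T, ∏ p, f p (φ k p) = Real.exp (-l * mdickWtV b a k) := by
    intro k hk
    have : mdickWtV b a k = ∑ p : Fin s × Fin N,
        if natDigit b (k p.1) p.2 ≠ 0 then max (((p.2 : ℕ) : ℝ) + 1 + a p.1) 1 else 0 := by
      rw [Fintype.sum_prod_type]
      unfold mdickWtV
      exact Finset.sum_congr rfl fun j _ => aux_mdick b hb _ _ _ (hN k hk j)
    rw [this, Finset.mul_sum, Real.exp_sum]
    refine Finset.prod_congr rfl fun p _ => ?_
    by_cases h0 : natDigit b (k p.1) p.2 = 0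
    · have : φ k p = 0 := Fin.ext (by simpa [φ] using h0)
      simp [f, this, h0]
    · have : φ k p ≠ 0 := fun h => h0 (by simpa [φ] using congrArg Fin.val h)
      simp [f, this, h0]
  have hf0 : ∀ p d, 0 ≤ f p d := by
    intro p d
    simp only [f]
    split_ifs <;> positivity
  have hsum : ∀ p, ∑ d, f p d ≤
      Real.exp (((b : ℝ) - 1) * Real.exp (-l * max (((p.2 : ℕ) : ℝ) + 1 + a p.1) 1)) := by
    intro p
    have : ∑ d, f p d = ((b : ℝ) - 1) * Real.exp (-l * max (((p.2 : ℕ) : ℝ) + 1 + a p.1) 1) + 1 := by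
      rw [← Finset.add_sum_erase _ _ (Finset.mem_univ (0 : Fin b))]
      rw [Finset.sum_congr rfl (g := fun _ => Real.exp (-l * max (((p.2 : ℕ) : ℝ) + 1 + a p.1) 1))]
      · simp only [Finset.sum_const, Finset.card_erase_of_mem (Finset.mem_univ _),
          Finset.card_univ, Fintype.card_fin, nsmul_eq_mul]
        rw [Nat.cast_sub (by omega)]
        simp [f]
        ring
      · intro d hd
        have : d ≠ 0 := (Finset.mem_erase.mp hd).1
        simp [f, this]
    rw [this]
    exact Real.add_one_le_exp _
  have hTsum : ∑ k ∈ T, Real.exp (-l * mdickWtV b a k) ≤ ∏ p, ∑ d, f p d := by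
    rw [Finset.prod_univ_sum, ← Finset.sum_congr rfl hval, Fintype.piFinset_univ,
      ← Finset.sum_image (f := fun d => ∏ p, f p (d p)) hinj]
    apply Finset.sum_le_sum_of_subset_of_nonneg (Finset.subset_univ _)
    intro d _ _
    exact Finset.prod_nonneg fun p _ => hf0 _ _
  have hprod : ∏ p, ∑ d, f p d ≤
      Real.exp (((b : ℝ) - 1) * ∑ j, (negCount (a j) : ℝ) + ((b : ℝ) - 1) * s * t) := by
    refine (Finset.prod_le_prod (fun p _ => Finset.sum_nonneg fun d _ => hf0 p d)
      (fun p _ => hsum p)).trans ?_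
    rw [← Real.exp_sum]
    apply Real.exp_le_exp.mpr
    rw [← Finset.mul_sum, Fintype.sum_prod_type, mul_assoc, ← mul_add]
    apply mul_le_mul_of_nonneg_left _ hb1
    refine (Finset.sum_le_sum fun j _ => aux_sum (a j) t l ht hel hl0 N).trans ?_
    simp [Finset.sum_add_distrib]
  have hlow : (T.card : ℝ) * Real.exp (-(M / t)) ≤ ∑ k ∈ T, Real.exp (-l * mdickWtV b a k) := by
    rw [← nsmul_eq_mul]
    apply Finset.card_nsmul_le_sum
    intro k hk
    apply Real.exp_le_exp.mpr
    have h1 := mul_le_mul_of_nonneg_left (hT k hk) hl0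
    have h2 := mul_le_mul_of_nonneg_right hlt hM
    have h3 : 1 / t * M = M / t := by ring
    linarith
  have := hlow.trans (hTsum.trans hprod)
  rw [Real.exp_neg, ← div_eq_mul_inv, div_le_iff₀ (Real.exp_pos _), ← Real.exp_add] at this
  rwa [← add_assoc]

/-- with `S = (b-1)·∑_{j=1}^s n_j`, for all `M ≥ 0` one has
`V_{s,a}(M) ≤ exp(S + 2·√((b-1)·s·M))`. -/
theorem statement13 (b : ℕ) (hb : 2 ≤ b) (s : ℕ) (hs : 0 < s)
    (a : ℕ → ℝ) (ha : Monotone a)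
    (S : ℝ) (hS : S = ((b : ℝ) - 1) * ∑ j : Fin s, (negCount (a j) : ℝ))
    (M : ℝ) (hM : 0 ≤ M) :
    (Set.ncard {k : Fin s → ℕ | mdickWtV b (fun j : Fin s => a j) k ≤ M} : ℝ) ≤
      Real.exp (S + 2 * Real.sqrt (((b : ℝ) - 1) * s * M)) := by
  have hb2 : (2 : ℝ) ≤ b := by exact_mod_cast hb
  have hs1 : (0 : ℝ) < s := by exact_mod_cast hs
  have hC : 0 < ((b : ℝ) - 1) * s := mul_pos (by linarith) hs1
  rcases Set.finite_or_infinite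
    {k : Fin s → ℕ | mdickWtV b (fun j : Fin s => a j) k ≤ M} with hfin | hinf
  swap
  · rw [hinf.ncard]
    simpa using (Real.exp_pos _).le
  rw [Set.ncard_eq_toFinset_card _ hfin]
  have key := fun t ht => aux_main b hb s (fun j : Fin s => a j) M hM t ht hfin.toFinset
    (fun k hk => by simpa using hk)
  simp only [← hS] at key
  generalize hfin.toFinset.card = n at key
  generalize ((b : ℝ) - 1) * s = C at hC key
  rcases hM.eq_or_lt with h0 | hpos
  · subst h0
    have hlim : Tendsto (fun t : ℝ => Real.exp (S + (C * t + 0 / t))) (𝓝[>] 0)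
        (𝓝 (Real.exp (S + 2 * Real.sqrt (C * 0)))) := by
      have : Continuous fun t : ℝ => Real.exp (S + (C * t + 0 / t)) := by
        simp only [zero_div]
        fun_prop
      have h := (this.tendsto 0).mono_left (nhdsWithin_le_nhds (s := Set.Ioi 0))
      simpa using h
    refine ge_of_tendsto hlim ?_
    filter_upwards [self_mem_nhdsWithin] with t ht
    exact key t ht
  · refine (key (Real.sqrt (C * M) / C) (by positivity)).trans (le_of_eq ?_)
    congr 2
    have h := Real.mul_self_sqrt (show 0 ≤ C * M by positivity)
    have hp : 0 < Real.sqrt (C * M) := by positivity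
    field_simp
    nlinarith

end
end
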